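/- Let τ be a positive real number and x a complex number. Then Φ(x, τ) = −(e^{iπ(1/4 − x²/τ)}/√τ)·conj( Φ( −conj(x)/τ , 1/τ ) ), where conj denotes complex conjugation and √τ is the positive real square root. -/

import Mathlib

open scoped Real
open MeasureTheory Set Complex

/-- Integral along the straight line `t ↦ c + e^{iθ} t`, `t ∈ ℝ`. -/
noncomputable def lineInt (c θ : ℝ) (f : ℂ → ℂ) : ℂ :=
  ∫ t : ℝ, f ((c : ℂ) + Complex.exp ((θ : ℂ) * Complex.I) * (t : ℂ)) *
    Complex.exp ((θ : ℂ) * Complex.I)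

/-- The Mordell integral `Φ(x, τ)`, the path being the straight line of slope 1
crossing the real axis at `c ∈ (0, 1)`. -/
noncomputable def mordellPhi (x τ : ℂ) (c : ℝ) : ℂ :=
  lineInt c (π/4) (fun u =>
    Complex.exp ((π : ℂ) * Complex.I * τ * u ^ 2 + 2 * (π : ℂ) * Complex.I * x * u) /
      (Complex.exp (2 * (π : ℂ) * Complex.I * u) - 1))

open Filter Topology

theorem line_inv (b : ℝ) (hb : 0 < b) (R : ℝ) :
    (∫ x in (-R)..R, ((x : ℂ) + ((-b : ℝ) : ℂ) * I)⁻¹) = I * ((2 * Real.arctan (R / b) : ℝ) : ℂ) ∧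
    (∫ x in (-R)..R, ((x : ℂ) + (b : ℂ) * I)⁻¹) = -I * ((2 * Real.arctan (R / b) : ℝ) : ℂ) := by
  have hpos : ∀ x : ℝ, x ^ 2 + b ^ 2 ≠ 0 := fun x => by positivity
  have hposC : ∀ x : ℝ, (x : ℂ) ^ 2 + (b : ℂ) ^ 2 ≠ 0 := fun x => by exact_mod_cast hpos x
  have e1 : ∀ x : ℝ, ((x : ℂ) + (b : ℂ) * I)⁻¹
      = ((x / (x ^ 2 + b ^ 2) : ℝ) : ℂ) - I * ((b * (b ^ 2 + x ^ 2)⁻¹ : ℝ) : ℂ) := by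
    intro x
    have h1 := hposC x
    have h3 : (b : ℂ) ^ 2 + (x : ℂ) ^ 2 ≠ 0 := by rwa [add_comm]
    refine inv_eq_of_mul_eq_one_right ?_
    push_cast
    field_simp
    ring_nf
    simp only [I_sq]
    ring
  have e2 : ∀ x : ℝ, ((x : ℂ) + ((-b : ℝ) : ℂ) * I)⁻¹
      = ((x / (x ^ 2 + b ^ 2) : ℝ) : ℂ) + I * ((b * (b ^ 2 + x ^ 2)⁻¹ : ℝ) : ℂ) := by
    intro x
    have h1 := hposC x
    have h3 : (b : ℂ) ^ 2 + (x : ℂ) ^ 2 ≠ 0 := by rwa [add_comm]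
    refine inv_eq_of_mul_eq_one_right ?_
    push_cast
    field_simp
    ring_nf
    simp only [I_sq]
    ring
  have c1 : Continuous fun x : ℝ => x / (x ^ 2 + b ^ 2) := by fun_prop (disch := (intro x; exact hpos _))
  have c2 : Continuous fun x : ℝ => b * (b ^ 2 + x ^ 2)⁻¹ := by
    fun_prop (disch := (intro x; rw [add_comm]; exact hpos _))
  have odd : ∫ x in (-R)..R, x / (x ^ 2 + b ^ 2) = 0 := by
    have h := intervalIntegral.integral_comp_neg (a := -R) (b := R)
      (f := fun x : ℝ => x / (x ^ 2 + b ^ 2))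
    simp only [neg_neg, neg_sq, neg_div, intervalIntegral.integral_neg] at h
    linarith
  have at1 : ∫ x in (-R)..R, b * (b ^ 2 + x ^ 2)⁻¹ = 2 * Real.arctan (R / b) := by
    rw [intervalIntegral.integral_const_mul]
    simp only [← one_div]
    have := integral_inv_sq_add_sq (a := -R) (b := R) hb.ne'
    simp only [← one_div] at this
    rw [this, neg_div, Real.arctan_neg]
    field_simp
    ring
  constructor
  · simp_rw [e2]
    rw [intervalIntegral.integral_add, intervalIntegral.integral_const_mul,
      intervalIntegral.integral_ofReal, intervalIntegral.integral_ofReal, odd, at1]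
    · simp
    · exact (continuous_ofReal.comp c1).intervalIntegrable _ _
    · exact (continuous_const.mul (continuous_ofReal.comp c2)).intervalIntegrable _ _
  · simp_rw [e1]
    rw [intervalIntegral.integral_sub, intervalIntegral.integral_const_mul,
      intervalIntegral.integral_ofReal, intervalIntegral.integral_ofReal, odd, at1]
    · simp
    · exact (continuous_ofReal.comp c1).intervalIntegrable _ _
    · exact (continuous_const.mul (continuous_ofReal.comp c2)).intervalIntegrable _ _

theorem arctan_lim (b : ℝ) (hb : 0 < b) :
    Tendsto (fun R : ℝ => ((2 * Real.arctan (R / b) : ℝ) : ℂ)) atTop (𝓝 (π : ℂ)) := by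
  have h : Tendsto (fun R : ℝ => 2 * Real.arctan (R / b)) atTop (𝓝 (2 * (π / 2))) := by
    refine Tendsto.const_mul _ ?_
    exact (tendsto_nhds_of_tendsto_nhdsWithin Real.tendsto_arctan_atTop).comp
      (tendsto_id.atTop_div_const hb)
  rw [mul_div_cancel₀ _ (two_ne_zero)] at h
  exact (continuous_ofReal.tendsto _).comp h

theorem side_lim (a b : ℝ) (g : ℝ → ℝ → ℂ) (B : ℝ → ℝ) (hB : Tendsto B atTop (𝓝 0))
    (h : ∀ᶠ R in atTop, ∀ y ∈ Icc (-b) a, ‖g R y‖ ≤ B R) (hab : -b ≤ a) :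
    Tendsto (fun R => I • ∫ y in (-b)..a, g R y) atTop (𝓝 0) := by
  have : Tendsto (fun R => B R * |a - -b|) atTop (𝓝 0) := by simpa using hB.mul_const |a - -b|
  refine squeeze_zero_norm' ?_ this
  filter_upwards [h] with R hR
  rw [norm_smul, norm_I, one_mul]
  refine intervalIntegral.norm_integral_le_of_norm_le_const ?_
  intro y hy
  rw [uIoc_of_le hab] at hy
  exact hR y ⟨hy.1.le, hy.2⟩

theorem strip_residue (a b : ℝ) (ha : 0 < a) (hb : 0 < b) (q : ℂ → ℂ)
    (hq : DifferentiableOn ℂ q {w : ℂ | w.im ∈ Icc (-b) a})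
    (i1 : Integrable fun x : ℝ => q (x + (a : ℂ) * I) / (x + (a : ℂ) * I))
    (i2 : Integrable fun x : ℝ => q (x + ((-b : ℝ) : ℂ) * I) / (x + ((-b : ℝ) : ℂ) * I))
    (B : ℝ → ℝ) (hB : Tendsto B atTop (𝓝 0))
    (hs1 : ∀ᶠ R : ℝ in atTop, ∀ y ∈ Icc (-b) a,
      ‖q ((R : ℂ) + (y : ℂ) * I) / ((R : ℂ) + (y : ℂ) * I)‖ ≤ B R)
    (hs2 : ∀ᶠ R : ℝ in atTop, ∀ y ∈ Icc (-b) a,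
      ‖q (((-R : ℝ) : ℂ) + (y : ℂ) * I) / (((-R : ℝ) : ℂ) + (y : ℂ) * I)‖ ≤ B R) :
    (∫ x : ℝ, q (x + ((-b : ℝ) : ℂ) * I) / (x + ((-b : ℝ) : ℂ) * I)) -
      (∫ x : ℝ, q (x + (a : ℂ) * I) / (x + (a : ℂ) * I)) = 2 * π * I * q 0 := by
  set S : Set ℂ := {w : ℂ | w.im ∈ Icc (-b) a} with hS
  have hS0 : S ∈ 𝓝 (0 : ℂ) := by
    have : im ⁻¹' (Icc (-b) a) ∈ 𝓝 (0 : ℂ) :=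
      continuous_im.continuousAt (Icc_mem_nhds (by simpa using hb) (by simpa using ha))
    exact this
  have hd : DifferentiableOn ℂ (dslope q 0) S := (Complex.differentiableOn_dslope hS0).2 hq
  have hne : ∀ w : ℂ, w ≠ 0 → dslope q 0 w = q w / w - q 0 * w⁻¹ := by
    intro w hw
    rw [dslope_of_ne _ hw, slope_def_field, sub_zero]
    field_simp
  have hab : -b ≤ a := by linarith
  have rect : ∀ R : ℝ,
      (∫ x : ℝ in (-R)..R, dslope q 0 (x + ((-b : ℝ) : ℂ) * I)) -
      (∫ x : ℝ in (-R)..R, dslope q 0 (x + (a : ℂ) * I)) +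
      I • (∫ y : ℝ in (-b)..a, dslope q 0 ((R : ℂ) + y * I)) -
      I • (∫ y : ℝ in (-b)..a, dslope q 0 (((-R : ℝ) : ℂ) + y * I)) = 0 := by
    intro R
    have := Complex.integral_boundary_rect_eq_zero_of_differentiableOn (dslope q 0)
      (⟨-R, -b⟩ : ℂ) (⟨R, a⟩ : ℂ) (hd.mono ?_)
    · simpa using this
    · intro w hw
      have := hw.2
      simp only [mem_preimage, uIcc_of_le hab] at this
      exact this
  have nz : ∀ (y : ℝ), y ≠ 0 → ∀ x : ℝ, (x : ℂ) + (y : ℂ) * I ≠ 0 := by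
    intro y hy x h
    apply hy
    simpa using congrArg im h
  have nzx : ∀ (x : ℝ), x ≠ 0 → ∀ y : ℝ, (x : ℂ) + (y : ℂ) * I ≠ 0 := by
    intro y hy x h
    apply hy
    simpa using congrArg re h
  have ii : ∀ y : ℝ, y ≠ 0 → ∀ R : ℝ,
      IntervalIntegrable (fun x : ℝ => q 0 * ((x : ℂ) + (y : ℂ) * I)⁻¹) volume (-R) R := by
    intro y hy R
    apply Continuous.intervalIntegrable
    fun_prop (disch := (intro x; exact nz y hy _))
  have hb' : (-b) ≠ 0 := by linarith
  have bot : ∀ R : ℝ, (∫ x : ℝ in (-R)..R, dslope q 0 (x + ((-b : ℝ) : ℂ) * I)) =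
      (∫ x : ℝ in (-R)..R, q (x + ((-b : ℝ) : ℂ) * I) / (x + ((-b : ℝ) : ℂ) * I)) -
        q 0 * (I * ((2 * Real.arctan (R / b) : ℝ) : ℂ)) := by
    intro R
    simp_rw [hne _ (nz (-b) hb' _)]
    rw [intervalIntegral.integral_sub i2.intervalIntegrable (ii _ hb' R),
      intervalIntegral.integral_const_mul, (line_inv b hb R).1]
  have top : ∀ R : ℝ, (∫ x : ℝ in (-R)..R, dslope q 0 (x + (a : ℂ) * I)) =
      (∫ x : ℝ in (-R)..R, q (x + (a : ℂ) * I) / (x + (a : ℂ) * I)) -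
        q 0 * (-I * ((2 * Real.arctan (R / a) : ℝ) : ℂ)) := by
    intro R
    simp_rw [hne _ (nz a ha.ne' _)]
    rw [intervalIntegral.integral_sub i1.intervalIntegrable (ii _ ha.ne' R),
      intervalIntegral.integral_const_mul, (line_inv a ha R).2]
  have hB' : Tendsto (fun R => B R + ‖q 0‖ * R⁻¹) atTop (𝓝 0) := by
    simpa using hB.add (tendsto_inv_atTop_zero.const_mul ‖q 0‖)
  have normx : ∀ R : ℝ, 0 < R → ∀ x : ℝ, |x| = R → ∀ y : ℝ,
      ‖q 0 * ((x : ℂ) + (y : ℂ) * I)⁻¹‖ ≤ ‖q 0‖ * R⁻¹ := by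
    intro R hR x hx y
    rw [norm_mul, norm_inv]
    gcongr
    have := Complex.abs_re_le_norm ((x : ℂ) + (y : ℂ) * I)
    simp at this
    rwa [hx] at this
  have s1 := side_lim a b (fun R y => dslope q 0 ((R : ℂ) + y * I)) _ hB' (by
    filter_upwards [hs1, eventually_gt_atTop 0] with R hR hR0 y hy
    rw [hne _ (nzx R hR0.ne' y)]
    exact (norm_sub_le _ _).trans (add_le_add (hR y hy) (normx R hR0 R (abs_of_pos hR0) y))) hab
  have s2 := side_lim a b (fun R y => dslope q 0 (((-R : ℝ) : ℂ) + y * I)) _ hB' (by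
    filter_upwards [hs2, eventually_gt_atTop 0] with R hR hR0 y hy
    rw [hne _ (nzx (-R) (by linarith) y)]
    exact (norm_sub_le _ _).trans (add_le_add (hR y hy)
      (normx R hR0 (-R) (by rw [abs_neg, abs_of_pos hR0]) y))) hab
  have l1 := intervalIntegral_tendsto_integral i1 tendsto_neg_atTop_atBot tendsto_id
  have l2 := intervalIntegral_tendsto_integral i2 tendsto_neg_atTop_atBot tendsto_id
  have L := (((l2.sub (((arctan_lim b hb).const_mul I).const_mul (q 0))).sub
    (l1.sub (((arctan_lim a ha).const_mul (-I)).const_mul (q 0)))).add s1).sub s2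
  have Z : Tendsto (fun _ : ℝ => (0 : ℂ)) atTop (𝓝 0) := tendsto_const_nhds
  have := tendsto_nhds_unique (L.congr (fun R => by
    have := rect R
    rw [bot, top] at this
    simpa using this)) Z
  linear_combination this

/-- Elementary bounds. -/
theorem expb_pos (α : ℝ) (z : ℂ) (hz : 1 ≤ z.re) :
    ‖cexp (α * z) / (cexp z - 1)‖ ≤ (1 - Real.exp (-1))⁻¹ * Real.exp (-(1 - α) * z.re) := by
  have hK : 0 < 1 - Real.exp (-1) := by
    have : Real.exp (-1) < 1 := by rw [Real.exp_lt_one_iff]; norm_num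
    linarith
  have h1 : (1 - Real.exp (-1)) * Real.exp z.re ≤ ‖cexp z - 1‖ := by
    have := norm_sub_norm_le (cexp z) 1
    rw [norm_exp, norm_one] at this
    have h2 : 1 ≤ Real.exp (-1) * Real.exp z.re := by
      rw [← Real.exp_add]; exact Real.one_le_exp (by linarith)
    linarith
  have hp : 0 < (1 - Real.exp (-1)) * Real.exp z.re := by positivity
  rw [norm_div, norm_exp, re_ofReal_mul]
  calc _ ≤ Real.exp (α * z.re) / ((1 - Real.exp (-1)) * Real.exp z.re) := by gcongr
    _ = _ := by
      rw [show -(1 - α) * z.re = α * z.re - z.re by ring, Real.exp_sub]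
      field_simp

theorem expb_neg (α : ℝ) (z : ℂ) (hz : z.re ≤ -1) :
    ‖cexp (α * z) / (cexp z - 1)‖ ≤ (1 - Real.exp (-1))⁻¹ * Real.exp (α * z.re) := by
  have hK : 0 < 1 - Real.exp (-1) := by
    have : Real.exp (-1) < 1 := by rw [Real.exp_lt_one_iff]; norm_num
    linarith
  have h1 : (1 - Real.exp (-1)) ≤ ‖cexp z - 1‖ := by
    have := norm_sub_norm_le 1 (cexp z)
    rw [norm_exp, norm_one, norm_sub_rev] at this
    have : Real.exp z.re ≤ Real.exp (-1) := Real.exp_le_exp.2 hz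
    linarith
  rw [norm_div, norm_exp, re_ofReal_mul, div_eq_inv_mul]
  gcongr

noncomputable def rr : ℝ := √2 / 2
noncomputable def eE : ℂ := (rr : ℂ) + (rr : ℂ) * I
noncomputable def eF : ℂ := (rr : ℂ) - (rr : ℂ) * I

theorem rr_pos : 0 < rr := by unfold rr; positivity
theorem rr_sq : rr ^ 2 = 1 / 2 := by
  unfold rr; rw [div_pow, Real.sq_sqrt (by norm_num)]; norm_num
theorem rr_sqC : (rr : ℂ) ^ 2 = 1 / 2 := by
  have := congrArg (fun x : ℝ => (x : ℂ)) rr_sq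
  simpa using this
theorem eE_eq : cexp (((π / 4 : ℝ) : ℂ) * I) = eE := by
  rw [exp_mul_I, ← ofReal_cos, ← ofReal_sin, Real.cos_pi_div_four, Real.sin_pi_div_four]
  rfl
theorem eE_mul_eF : eE * eF = 1 := by
  unfold eE eF; linear_combination 2 * rr_sqC - (rr : ℂ) ^ 2 * I_sq
theorem eE_sq : eE ^ 2 = I := by
  unfold eE; linear_combination (2 * I) * rr_sqC + (rr : ℂ) ^ 2 * I_sq
theorem eF_sq : eF ^ 2 = -I := by
  unfold eF; linear_combination (-2 * I) * rr_sqC + (rr : ℂ) ^ 2 * I_sq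
theorem conj_eE : starRingEnd ℂ eE = eF := by
  unfold eE eF; simp [sub_eq_add_neg]
theorem eE_ne : eE ≠ 0 := left_ne_zero_of_mul_eq_one eE_mul_eF
theorem eE_re : eE.re = rr := by simp [eE]
theorem eE_im : eE.im = rr := by simp [eE]
theorem eF_re : eF.re = rr := by simp [eF]
theorem eF_im : eF.im = -rr := by simp [eF]

theorem exp_one_int {u : ℂ} (h : cexp (2 * π * I * u) = 1) : ∃ n : ℤ, u = n := by
  obtain ⟨n, hn⟩ := Complex.exp_eq_one_iff.1 h
  refine ⟨n, ?_⟩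
  have : (2 * π * I : ℂ) ≠ 0 := two_pi_I_ne_zero
  apply mul_left_cancel₀ this
  rw [hn]; ring

theorem not_int_line {c : ℝ} (h0 : 0 < c) (h1 : c < 1) {e : ℂ} (he : e.im ≠ 0) (t : ℝ) (n : ℤ) :
    (c : ℂ) + e * t ≠ n := by
  intro h
  have h2 := congrArg im h
  have h3 := congrArg re h
  simp at h2 h3
  have ht : t = 0 := by tauto
  subst ht
  simp at h3
  subst h3
  norm_cast at h0 h1
  lia

theorem den_ne {c : ℝ} (h0 : 0 < c) (h1 : c < 1) (t : ℝ) :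
    cexp (2 * π * I * ((c : ℂ) + eE * t)) - 1 ≠ 0 := by
  intro h
  obtain ⟨n, hn⟩ := exp_one_int (sub_eq_zero.1 h)
  exact not_int_line h0 h1 (by rw [eE_im]; exact rr_pos.ne') t n hn

theorem re_line (c t : ℝ) : (2 * π * I * ((c : ℂ) + eE * t)).re = -(2 * π * rr) * t := by
  simp [eE_re, eE_im]; ring

theorem int_line {c α : ℝ} (h0 : 0 < c) (h1 : c < 1) (a0 : 0 < α) (a1 : α < 1) :
    Integrable fun t : ℝ => cexp (α * (2 * π * I * ((c : ℂ) + eE * t))) /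
      (cexp (2 * π * I * ((c : ℂ) + eE * t)) - 1) := by
  have hc : Continuous fun t : ℝ => cexp (α * (2 * π * I * ((c : ℂ) + eE * t))) /
      (cexp (2 * π * I * ((c : ℂ) + eE * t)) - 1) := by
    fun_prop (disch := (intro x; exact den_ne h0 h1 x))
  have hk : 0 < 2 * π * rr := by have := rr_pos; positivity
  refine hc.locallyIntegrable.integrable_of_isBigO_atBot_atTop
    (g := fun t : ℝ => Real.exp (((1 - α) * (2 * π * rr)) * t))
    (g' := fun t : ℝ => Real.exp (-(α * (2 * π * rr)) * t)) ?_ ?_ ?_ ?_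
  · refine Asymptotics.IsBigO.of_bound (1 - Real.exp (-1))⁻¹ ?_
    filter_upwards [eventually_le_atBot (-(1 / (2 * π * rr)))] with t ht
    refine (expb_pos α _ ?_).trans ?_
    · rw [re_line]
      have := mul_le_mul_of_nonneg_left ht hk.le
      rw [mul_neg, mul_one_div_cancel hk.ne'] at this
      linarith
    · rw [re_line, Real.norm_of_nonneg (Real.exp_pos _).le]
      apply le_of_eq; ring_nf
  · refine ⟨Iic 0, Iic_mem_atBot 0, ?_⟩
    exact integrableOn_exp_mul_Iic (by nlinarith) 0
  · refine Asymptotics.IsBigO.of_bound (1 - Real.exp (-1))⁻¹ ?_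
    filter_upwards [eventually_ge_atTop (1 / (2 * π * rr))] with t ht
    refine (expb_neg α _ ?_).trans ?_
    · rw [re_line]
      have := mul_le_mul_of_nonneg_left ht hk.le
      rw [mul_one_div_cancel hk.ne'] at this
      linarith
    · rw [re_line, Real.norm_of_nonneg (Real.exp_pos _).le]
      apply le_of_eq; ring_nf
  · refine ⟨Ioi 0, Ioi_mem_atTop 0, ?_⟩
    exact exp_neg_integrableOn_Ioi 0 (by positivity)

theorem norm_exp_st (s t : ℝ) : ‖cexp (2 * π * I * (s * t))‖ = 1 := by
  rw [norm_exp]; simp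

/-- integrability for `v` on the falling line -/
theorem int_line' {c α : ℝ} (h0 : 0 < c) (h1 : c < 1) (a0 : 0 < α) (a1 : α < 1) (s : ℝ) :
    Integrable fun t : ℝ => cexp (2 * π * I * ((c : ℂ) + eE * t) * (α + eF * s)) /
      (cexp (2 * π * I * ((c : ℂ) + eE * t)) - 1) := by
  have h := ((int_line h0 h1 a0 a1).bdd_mul (f := fun t : ℝ => cexp (2 * π * I * (s * t))) (c := 1)
    (Continuous.aestronglyMeasurable (by fun_prop))
    (Eventually.of_forall fun t => (norm_exp_st s t).le)).const_mul (cexp (2 * π * I * (c * eF * s)))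
  refine h.congr (Eventually.of_forall fun t => ?_)
  simp only
  rw [← mul_div_assoc, ← mul_div_assoc, ← Complex.exp_add, ← Complex.exp_add]
  congr 2
  linear_combination (-2 * π * I * t * s) * eE_mul_eF

theorem J_eval {c α : ℝ} (h0 : 0 < c) (h1 : c < 1) (a0 : 0 < α) (a1 : α < 1) (s : ℝ) :
    (cexp (2 * π * I * (α + eF * s)) - 1) *
    (∫ t : ℝ, cexp (2 * π * I * ((c : ℂ) + eE * t) * (α + eF * s)) /
      (cexp (2 * π * I * ((c : ℂ) + eE * t)) - 1) * eE) = cexp (2 * π * I * (α + eF * s)) := by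
  set v : ℂ := α + eF * s with hv
  have hi := int_line' h0 h1 a0 a1 s
  rw [← hv] at hi
  set N : ℂ → ℂ := fun w => cexp (2 * π * I * (1 + eE * w) * v) * eE with hN
  set D : ℂ → ℂ := fun w => cexp (2 * π * I * (eE * w)) - 1 with hD
  have hDd : Differentiable ℂ D := by rw [hD]; fun_prop
  have hD0 : D 0 = 0 := by simp [hD]
  have hD' : HasDerivAt D (2 * π * I * eE) 0 := by
    have h1 : HasDerivAt (fun w : ℂ => 2 * π * I * (eE * w)) (2 * π * I * eE) 0 := by
      have := ((hasDerivAt_id (0 : ℂ)).const_mul eE).const_mul (2 * π * I)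
      simpa using this
    have := h1.cexp.sub_const 1
    simp only [mul_zero, Complex.exp_zero, one_mul] at this
    exact this
  set a : ℝ := (1 - c) * rr with ha
  set b : ℝ := c * rr with hb
  have ha0 : 0 < a := mul_pos (by linarith) rr_pos
  have hb0 : 0 < b := mul_pos h0 rr_pos
  set q : ℂ → ℂ := fun w => N w / dslope D 0 w with hq
  have hdsd : Differentiable ℂ (dslope D 0) := by
    rw [← differentiableOn_univ]
    exact (Complex.differentiableOn_dslope univ_mem).2 hDd.differentiableOn
  have hds0 : dslope D 0 0 = 2 * π * I * eE := by rw [dslope_same, hD'.deriv]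
  have hdsne : ∀ w : ℂ, w ≠ 0 → dslope D 0 w = D w / w := by
    intro w hw
    rw [dslope_of_ne _ hw, slope_def_field, hD0, sub_zero, sub_zero]
  have hDne : ∀ w : ℂ, w.im ∈ Icc (-b) a → w ≠ 0 → D w ≠ 0 := by
    intro w hw hw0 h
    obtain ⟨n, hn⟩ := exp_one_int (sub_eq_zero.1 h)
    have h2 : w = eF * n := by rw [← hn]; linear_combination (-w) * eE_mul_eF
    have h3 : w.im = -rr * n := by rw [h2]; simp [eF_im]
    rw [h3] at hw
    have hr := rr_pos
    have u1 : (n : ℝ) < 1 := by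
      have := hw.1
      by_contra hcon
      push Not at hcon
      nlinarith
    have u2 : (-1 : ℝ) < n := by
      have := hw.2
      by_contra hcon
      push Not at hcon
      nlinarith
    have : n = 0 := by
      have u1' : n < 1 := by exact_mod_cast u1
      have u2' : -1 < n := by exact_mod_cast u2
      lia
    subst this
    simp at h2
    exact hw0 h2
  have hqd : DifferentiableOn ℂ q {w : ℂ | w.im ∈ Icc (-b) a} := by
    intro w hw
    apply DifferentiableAt.differentiableWithinAt
    have hNd : DifferentiableAt ℂ N w := by rw [hN]; fun_prop
    refine hNd.div (hdsd w) ?_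
    by_cases h : w = 0
    · rw [h, hds0]
      exact mul_ne_zero two_pi_I_ne_zero eE_ne
    · rw [hdsne w h]
      exact div_ne_zero (hDne w hw h) h
  have hqw : ∀ w : ℂ, w ≠ 0 → q w / w = N w / D w := by
    intro w hw
    rw [hq]
    simp only
    rw [hdsne w hw]
    field_simp
  have nz : ∀ (y : ℝ), y ≠ 0 → ∀ x : ℝ, (x : ℂ) + (y : ℂ) * I ≠ 0 := by
    intro y hy x h
    apply hy
    simpa using congrArg im h
  have nzx : ∀ (x : ℝ), x ≠ 0 → ∀ y : ℝ, (x : ℂ) + (y : ℂ) * I ≠ 0 := by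
    intro y hy x h
    apply hy
    simpa using congrArg re h
  -- the two lines
  have per : ∀ u : ℂ, cexp (2 * π * I * (u + 1)) = cexp (2 * π * I * u) := by
    intro u
    rw [mul_add, Complex.exp_add, mul_one, Complex.exp_two_pi_mul_I, mul_one]
  have L1 : ∀ x : ℝ, N (x + (a : ℂ) * I) / D (x + (a : ℂ) * I) =
      (fun t : ℝ => cexp (2 * π * I * ((c : ℂ) + eE * t) * v) /
      (cexp (2 * π * I * ((c : ℂ) + eE * t)) - 1) * eE) (x + (1 - c) * rr) := by
    intro x
    have hu : 1 + eE * ((x : ℂ) + (a : ℂ) * I) = c + eE * ((x + (1 - c) * rr : ℝ) : ℂ) := by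
      rw [ha]; push_cast
      have : eE * eF = 1 := eE_mul_eF
      unfold eF at this
      linear_combination (c - 1) * this
    simp only [hN, hD]
    rw [hu, ← per (eE * _), add_comm (eE * _) 1, hu]
    ring
  have L2 : ∀ x : ℝ, N (x + ((-b : ℝ) : ℂ) * I) / D (x + ((-b : ℝ) : ℂ) * I) =
      (fun t : ℝ => cexp (2 * π * I * v) * (cexp (2 * π * I * ((c : ℂ) + eE * t) * v) /
      (cexp (2 * π * I * ((c : ℂ) + eE * t)) - 1) * eE)) (x + (- c * rr)) := by
    intro x
    have hu : eE * ((x : ℂ) + ((-b : ℝ) : ℂ) * I) = c + eE * ((x + (- c * rr) : ℝ) : ℂ) := by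
      rw [hb]; push_cast
      have : eE * eF = 1 := eE_mul_eF
      unfold eF at this
      linear_combination c * this
    simp only [hN, hD]
    rw [hu, mul_add (2 * π * I) 1, add_mul, Complex.exp_add]
    ring_nf
  have hi1 := (hi.mul_const eE)
  have hi2 := hi1.const_mul (cexp (2 * π * I * v))
  have hk : 0 < 2 * π * rr := by have := rr_pos; positivity
  set k : ℝ := 2 * π * rr with hkdef
  set M : ℝ := ‖cexp (2 * π * I * v)‖ * Real.exp (2 * π * |s| * (a + b)) * ‖eE‖ with hM
  have hM0 : 0 ≤ M := by positivity
  set K : ℝ := (1 - Real.exp (-1))⁻¹ with hK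
  have hK0 : 0 ≤ K := by
    have : Real.exp (-1) < 1 := by rw [Real.exp_lt_one_iff]; norm_num
    rw [hK]; apply inv_nonneg.2; linarith
  have rez : ∀ x y : ℝ, (2 * π * I * (eE * ((x : ℂ) + (y : ℂ) * I))).re = -k * (x + y) := by
    intro x y
    simp [eE_re, eE_im, hkdef]; ring
  have bnd : ∀ x y : ℝ, y ∈ Icc (-b) a →
      ‖N ((x : ℂ) + (y : ℂ) * I) / D ((x : ℂ) + (y : ℂ) * I)‖ ≤
      M * ‖cexp (α * (2 * π * I * (eE * ((x : ℂ) + (y : ℂ) * I)))) /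
        (cexp (2 * π * I * (eE * ((x : ℂ) + (y : ℂ) * I))) - 1)‖ := by
    intro x y hy
    set w : ℂ := (x : ℂ) + (y : ℂ) * I with hw
    have e1 : N w / D w = (cexp (2 * π * I * v) * cexp (2 * π * I * (s * w)) * eE) *
        (cexp (α * (2 * π * I * (eE * w))) / (cexp (2 * π * I * (eE * w)) - 1)) := by
      simp only [hN, hD]
      rw [← mul_div_assoc]
      congr 1
      rw [mul_right_comm (cexp _ * cexp _) eE, ← Complex.exp_add, ← Complex.exp_add]
      congr 2
      rw [hv]
      linear_combination (2 * π * I * s * w) * eE_mul_eF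
    rw [e1, norm_mul]
    refine mul_le_mul_of_nonneg_right ?_ (norm_nonneg _)
    rw [norm_mul, norm_mul, hM]
    gcongr
    rw [norm_exp]
    apply Real.exp_le_exp.2
    have : (2 * π * I * (s * w)).re = 2 * π * (-s * y) := by
      rw [hw]; simp
    rw [this, mul_assoc (2 * π)]
    refine mul_le_mul_of_nonneg_left ?_ (by positivity)
    calc -s * y ≤ |-s * y| := le_abs_self _
      _ = |s| * |y| := by rw [abs_mul, abs_neg]
      _ ≤ |s| * (a + b) := by
        gcongr
        rw [abs_le]
        constructor <;> linarith [hy.1, hy.2]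
  have hexp : ∀ d x0 : ℝ, 0 < d →
      Tendsto (fun R : ℝ => Real.exp (-d * (R - x0))) atTop (𝓝 0) := by
    intro d x0 hd
    refine Real.tendsto_exp_atBot.comp ?_
    refine Tendsto.const_mul_atTop_of_neg (by linarith) ?_
    exact tendsto_atTop_add_const_right _ _ tendsto_id
  have hB : Tendsto (fun R : ℝ => M * (K * Real.exp (-((1 - α) * k) * (R - a))) +
      M * (K * Real.exp (-(α * k) * (R - b)))) atTop (𝓝 0) := by
    have := (((hexp ((1 - α) * k) a (mul_pos (by linarith) hk)).const_mul K).const_mul M).add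
      (((hexp (α * k) b (mul_pos a0 hk)).const_mul K).const_mul M)
    simpa using this
  have key := strip_residue a b ha0 hb0 q hqd
    (by
      simp_rw [hqw _ (nz a ha0.ne' _), L1]
      exact hi1.comp_add_right _)
    (by
      simp_rw [hqw _ (nz (-b) (by linarith) _), L2]
      exact hi2.comp_add_right _) _ hB
    (by
      filter_upwards [eventually_gt_atTop 0, eventually_ge_atTop (1 / k + b)] with R hR hR1 y hy
      rw [hqw _ (nzx R hR.ne' y)]
      have h5 : 1 ≤ k * (R - b) := by
        have := mul_le_mul_of_nonneg_left (le_sub_iff_add_le.2 hR1) hk.le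
        rwa [mul_one_div_cancel hk.ne'] at this
      have h6 : k * (R - b) ≤ k * (R + y) :=
        mul_le_mul_of_nonneg_left (by linarith [hy.1]) hk.le
      refine (bnd R y hy).trans (le_add_of_nonneg_of_le (by positivity) ?_)
      refine mul_le_mul_of_nonneg_left ?_ hM0
      refine (expb_neg α _ ?_).trans ?_
      · rw [rez]; linarith
      · rw [rez]
        refine mul_le_mul_of_nonneg_left (Real.exp_le_exp.2 ?_) hK0
        have := mul_le_mul_of_nonneg_left h6 a0.le
        linarith)
    (by
      filter_upwards [eventually_gt_atTop 0, eventually_ge_atTop (1 / k + a)] with R hR hR1 y hy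
      rw [hqw _ (nzx (-R) (by linarith) y)]
      have h5 : 1 ≤ k * (R - a) := by
        have := mul_le_mul_of_nonneg_left (le_sub_iff_add_le.2 hR1) hk.le
        rwa [mul_one_div_cancel hk.ne'] at this
      have h6 : k * (R - a) ≤ k * (R - y) :=
        mul_le_mul_of_nonneg_left (by linarith [hy.2]) hk.le
      refine (bnd (-R) y hy).trans (le_add_of_le_of_nonneg ?_ (by positivity))
      refine mul_le_mul_of_nonneg_left ?_ hM0
      refine (expb_pos α _ ?_).trans ?_
      · rw [rez]; linarith
      · rw [rez]
        refine mul_le_mul_of_nonneg_left (Real.exp_le_exp.2 ?_) hK0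
        have := mul_le_mul_of_nonneg_left h6 (sub_pos.2 a1).le
        linarith)
  simp_rw [hqw _ (nz (-b) (by linarith) _), hqw _ (nz a ha0.ne' _), L1, L2] at key
  rw [integral_add_right_eq_self (fun t : ℝ => cexp (2 * π * I * v) *
      (cexp (2 * π * I * ((c : ℂ) + eE * t) * v) /
      (cexp (2 * π * I * ((c : ℂ) + eE * t)) - 1) * eE)),
    integral_add_right_eq_self (fun t : ℝ => (cexp (2 * π * I * ((c : ℂ) + eE * t) * v) /
      (cexp (2 * π * I * ((c : ℂ) + eE * t)) - 1) * eE)), integral_const_mul] at key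
  have q0 : 2 * π * I * q 0 = cexp (2 * π * I * v) := by
    simp only [hq, hN]
    rw [hds0]
    have := eE_ne
    have h2 : (2 * π * I : ℂ) ≠ 0 := two_pi_I_ne_zero
    rw [mul_zero, add_zero, mul_one, ← mul_div_assoc, ← mul_assoc,
      mul_div_mul_right _ _ this, mul_div_cancel_left₀ _ h2]
  rw [q0] at key
  linear_combination key

theorem gauss_eval (τ : ℝ) (hτ : 0 < τ) (x u : ℂ) (α : ℝ) :
    ∫ s : ℝ, cexp (-(π * I * ((α + eF * s) - x) ^ 2 / τ) + 2 * π * I * u * (α + eF * s)) =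
      (√τ : ℂ) * cexp (π * I * τ * u ^ 2 + 2 * π * I * x * u) := by
  have hτC : (τ : ℂ) ≠ 0 := by exact_mod_cast hτ.ne'
  have hπC : (π : ℂ) ≠ 0 := by exact_mod_cast Real.pi_ne_zero
  have h := integral_cexp_quadratic (b := ((-(π / τ) : ℝ) : ℂ))
    (by rw [ofReal_re]; have := Real.pi_pos; simp; positivity)
    (-(2 * π * I * (α - x) * eF / τ) + 2 * π * I * u * eF)
    (-(π * I * (α - x) ^ 2 / τ) + 2 * π * I * u * α)
  have e1 : ∀ s : ℝ, -(π * I * ((α + eF * s) - x) ^ 2 / τ) + 2 * π * I * u * (α + eF * s) =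
      ((-(π / τ) : ℝ) : ℂ) * s ^ 2 + (-(2 * π * I * (α - x) * eF / τ) + 2 * π * I * u * eF) * s
      + (-(π * I * (α - x) ^ 2 / τ) + 2 * π * I * u * α) := by
    intro s
    push_cast
    field_simp
    linear_combination (- s ^ 2 * I) * eF_sq + s ^ 2 * I_sq
  simp_rw [e1]
  rw [h]
  have e2 : ((π : ℂ) / -((-(π / τ) : ℝ) : ℂ)) ^ (1 / 2 : ℂ) = (√τ : ℂ) := by
    have : ((π : ℂ) / -((-(π / τ) : ℝ) : ℂ)) = (τ : ℂ) := by
      push_cast; field_simp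
    rw [this, Real.sqrt_eq_rpow, ofReal_cpow hτ.le]
    norm_num
  rw [e2]
  congr 2
  push_cast
  field_simp
  ring_nf
  simp only [eF_sq]
  ring_nf
  simp only [I_sq]
  ring_nf

/-- Functional equation of the Mordell integral for positive real `τ`. -/
theorem mordell_functional_equation_real (τ : ℝ) (hτ : 0 < τ) (x : ℂ) (c₁ c₂ : ℝ)
    (hc₁ : 0 < c₁) (hc₁' : c₁ < 1) (hc₂ : 0 < c₂) (hc₂' : c₂ < 1) :
    mordellPhi x (τ : ℂ) c₁ =
      -(Complex.exp ((π : ℂ) * Complex.I * (1 / 4 - x ^ 2 / (τ : ℂ))) / (Real.sqrt τ : ℂ)) *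
        starRingEnd ℂ (mordellPhi (-(starRingEnd ℂ x) / (τ : ℂ)) (1 / (τ : ℂ)) c₂) := by
  have hτC : (τ : ℂ) ≠ 0 := by exact_mod_cast hτ.ne'
  have hsC : (√τ : ℂ) ≠ 0 := by exact_mod_cast (Real.sqrt_pos.2 hτ).ne'
  have vne : ∀ s : ℝ, cexp (2 * π * I * (c₂ + eF * s)) ≠ 1 := by
    intro s h
    obtain ⟨n, hn⟩ := exp_one_int h
    exact not_int_line hc₂ hc₂' (by rw [eF_im]; exact neg_ne_zero.2 rr_pos.ne') s n hn
  -- the conjugated side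
  have hconj : starRingEnd ℂ (mordellPhi (-(starRingEnd ℂ x) / (τ : ℂ)) (1 / (τ : ℂ)) c₂) =
      ∫ s : ℝ, cexp (-(π * I * (c₂ + eF * s) ^ 2 / τ) + 2 * π * I * x * (c₂ + eF * s) / τ) /
        (cexp (-(2 * π * I * (c₂ + eF * s))) - 1) * eF := by
    unfold mordellPhi lineInt
    rw [← integral_conj]
    congr 1
    ext s
    rw [eE_eq]
    simp only [map_mul, map_div₀, map_sub, map_one, ← Complex.exp_conj, map_add, map_pow, conj_I,
      conj_ofReal, conj_eE, map_neg, conj_conj, map_ofNat]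
    congr 3
    · ring
    · ring_nf
  set Kf : ℝ → ℝ → ℂ := fun t s =>
    cexp (-(π * I * ((c₂ + eF * s) - x) ^ 2 / τ) +
      2 * π * I * ((c₁ : ℂ) + eE * t) * (c₂ + eF * s)) /
      (cexp (2 * π * I * ((c₁ : ℂ) + eE * t)) - 1) * eE with hKf
  have hs : ∀ t : ℝ, ∫ s : ℝ, Kf t s = (√τ : ℂ) *
      (cexp (π * I * τ * ((c₁ : ℂ) + eE * t) ^ 2 + 2 * π * I * x * ((c₁ : ℂ) + eE * t)) /
      (cexp (2 * π * I * ((c₁ : ℂ) + eE * t)) - 1) * eE) := by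
    intro t
    simp only [hKf]
    rw [integral_mul_const, integral_div, gauss_eval τ hτ]
    ring
  have hPhi : (√τ : ℂ) * mordellPhi x (τ : ℂ) c₁ = ∫ t : ℝ, ∫ s : ℝ, Kf t s := by
    simp_rw [hs]
    rw [integral_const_mul]
    unfold mordellPhi lineInt
    rw [eE_eq]
  have ht : ∀ s : ℝ, ∫ t : ℝ, Kf t s = -(cexp (-(π * I * ((c₂ + eF * s) - x) ^ 2 / τ)) /
      (cexp (-(2 * π * I * (c₂ + eF * s))) - 1)) := by
    intro s
    have h := J_eval hc₁ hc₁' hc₂ hc₂' s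
    have h2 : ∀ t : ℝ, Kf t s = cexp (-(π * I * ((c₂ + eF * s) - x) ^ 2 / τ)) *
        (cexp (2 * π * I * ((c₁ : ℂ) + eE * t) * (c₂ + eF * s)) /
      (cexp (2 * π * I * ((c₁ : ℂ) + eE * t)) - 1) * eE) := by
      intro t
      simp only [hKf]
      rw [Complex.exp_add]
      ring
    simp_rw [h2]
    rw [integral_const_mul]
    have h3 : cexp (2 * π * I * (c₂ + eF * s)) - 1 ≠ 0 := sub_ne_zero.2 (vne s)
    rw [mul_comm, ← eq_div_iff h3] at h
    rw [h, Complex.exp_neg (2 * π * I * (c₂ + eF * s))]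
    have h4 := Complex.exp_ne_zero (2 * π * I * (c₂ + eF * s))
    set y := cexp (2 * π * I * (c₂ + eF * s))
    have h5 : 1 - y ≠ 0 := by
      intro h6; apply h3; linear_combination -h6
    have h6 : y⁻¹ - 1 = -(y - 1) / y := by field_simp; ring
    rw [h6]
    field_simp
  have hKint : Integrable (Function.uncurry Kf) (volume.prod volume) := by
    have g1 := (int_line hc₁ hc₁' hc₂ hc₂').mul_const eE
    have g2 : Integrable fun s : ℝ => cexp (-(π * I * ((c₂ + eF * s) - x) ^ 2 / τ) +
        2 * π * I * (c₁ : ℂ) * (c₂ + eF * s)) := by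
      by_contra H
      have := gauss_eval τ hτ x c₁ c₂
      rw [integral_undef H] at this
      exact (mul_ne_zero hsC (Complex.exp_ne_zero _)) this.symm
    have g3 := ((g1.mul_prod g2).bdd_mul
      (f := fun p : ℝ × ℝ => cexp (2 * π * I * (p.2 * p.1))) (c := 1)
      (Continuous.aestronglyMeasurable (by fun_prop))
      (Eventually.of_forall fun p => (norm_exp_st p.2 p.1).le)).const_mul
        (cexp (-(2 * π * I * (c₁ * c₂))))
    refine g3.congr (Eventually.of_forall fun p => ?_)
    obtain ⟨t, s⟩ := p
    simp only [hKf, Function.uncurry]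
    have : cexp (-(π * I * ((c₂ + eF * s) - x) ^ 2 / τ) +
      2 * π * I * ((c₁ : ℂ) + eE * t) * (c₂ + eF * s)) = cexp (-(2 * π * I * (c₁ * c₂))) *
      cexp (2 * π * I * (s * t)) * cexp (c₂ * (2 * π * I * ((c₁ : ℂ) + eE * t))) *
      cexp (-(π * I * ((c₂ + eF * s) - x) ^ 2 / τ) + 2 * π * I * (c₁ : ℂ) * (c₂ + eF * s)) := by
      rw [← Complex.exp_add, ← Complex.exp_add, ← Complex.exp_add]
      congr 1
      linear_combination (2 * π * I * t * s) * eE_mul_eF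
    rw [this]
    ring
  have hswap := integral_integral_swap hKint
  rw [hswap] at hPhi
  simp_rw [ht] at hPhi
  rw [hconj, ← mul_right_inj' hsC, hPhi, ← mul_assoc, ← integral_const_mul]
  congr 1
  ext s
  have h1 : cexp (π * I * (1 / 4 - x ^ 2 / τ)) = eE * cexp (-(π * I * x ^ 2 / τ)) := by
    rw [← eE_eq, ← Complex.exp_add]
    congr 1
    push_cast
    ring
  have h2 : cexp (-(π * I * ((c₂ + eF * s) - x) ^ 2 / τ)) = cexp (-(π * I * x ^ 2 / τ)) *
      cexp (-(π * I * (c₂ + eF * s) ^ 2 / τ) + 2 * π * I * x * (c₂ + eF * s) / τ) := by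
    rw [← Complex.exp_add]
    congr 1
    ring
  rw [h1, h2, mul_neg, mul_div_cancel₀ _ hsC]
  generalize cexp (-(π * I * x ^ 2 / τ)) = A
  generalize cexp (-(π * I * (c₂ + eF * s) ^ 2 / τ) + 2 * π * I * x * (c₂ + eF * s) / τ) = C
  generalize cexp (-(2 * π * I * (c₂ + eF * s))) - 1 = G
  linear_combination (A * C / G) * eE_mul_eF
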